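/- If g ≠ 0 and τ ∈ (0, 1/λ_max], then the map α ↦ τ_α is monotonically nondecreasing on (0,2]; in particular τ_α = τ for every α ∈ (0,1], and τ_{α₁} ≤ τ_{α₂} whenever 1 ≤ α₁ ≤ α₂ ≤ 2. -/

import Mathlib

open scoped RealInnerProductSpace

/-- The dogleg path: `p(α) = -τ g` for `α ∈ (0,1]`, and
`p(α) = -τ g + (α-1)(-Q⁻¹ g + τ g)` for `α ∈ (1,2]`. -/
noncomputable def doglegPath {n : ℕ} (τ : ℝ) (g : EuclideanSpace ℝ (Fin n))
    (Qinv : EuclideanSpace ℝ (Fin n) →ₗ[ℝ] EuclideanSpace ℝ (Fin n)) (α : ℝ) :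
    EuclideanSpace ℝ (Fin n) :=
  if α ≤ 1 then (-τ) • g else (-τ) • g + (α - 1) • (-(Qinv g) + τ • g)

/-- The dogleg step size `τ_α = -‖p(α)‖² / ⟨g, p(α)⟩`. -/
noncomputable def doglegTau {n : ℕ} (τ : ℝ) (g : EuclideanSpace ℝ (Fin n))
    (Qinv : EuclideanSpace ℝ (Fin n) →ₗ[ℝ] EuclideanSpace ℝ (Fin n)) (α : ℝ) : ℝ :=
  -‖doglegPath τ g Qinv α‖ ^ 2 / ⟪g, doglegPath τ g Qinv α⟫

/-- `g_α = (⟨g, p(α)⟩ / ‖p(α)‖²) p(α)`. -/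
noncomputable def doglegG {n : ℕ} (τ : ℝ) (g : EuclideanSpace ℝ (Fin n))
    (Qinv : EuclideanSpace ℝ (Fin n) →ₗ[ℝ] EuclideanSpace ℝ (Fin n)) (α : ℝ) :
    EuclideanSpace ℝ (Fin n) :=
  (⟪g, doglegPath τ g Qinv α⟫ / ‖doglegPath τ g Qinv α‖ ^ 2) • doglegPath τ g Qinv α

/-- The (shifted) quadratic model `q(x) = ⟨g, x⟩ + (1/2) xᵀ Q x`. -/
noncomputable def quadModel {n : ℕ}
    (Q : EuclideanSpace ℝ (Fin n) →ₗ[ℝ] EuclideanSpace ℝ (Fin n))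
    (g x : EuclideanSpace ℝ (Fin n)) : ℝ :=
  ⟪g, x⟫ + (1 / 2) * ⟪Q x, x⟫

/-- The surrogate `m_α(x) = ⟨g_α, x⟩ + (1/(2 τ_α)) ‖x‖²`. -/
noncomputable def doglegSurrogate {n : ℕ} (τ : ℝ) (g : EuclideanSpace ℝ (Fin n))
    (Qinv : EuclideanSpace ℝ (Fin n) →ₗ[ℝ] EuclideanSpace ℝ (Fin n)) (α : ℝ)
    (x : EuclideanSpace ℝ (Fin n)) : ℝ :=
  ⟪doglegG τ g Qinv α, x⟫ + (1 / (2 * doglegTau τ g Qinv α)) * ‖x‖ ^ 2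
/-- If `g ≠ 0` and `τ ∈ (0, 1/λ_max]`, then `α ↦ τ_α` is monotonically
nondecreasing on `(0,2]`; in particular `τ_α = τ` for every `α ∈ (0,1]`, and
`τ_{α₁} ≤ τ_{α₂}` whenever `1 ≤ α₁ ≤ α₂ ≤ 2`. -/
theorem doglegTau_monotone {n : ℕ}
    (Q Qinv : EuclideanSpace ℝ (Fin n) →ₗ[ℝ] EuclideanSpace ℝ (Fin n))
    (hQsymm : ∀ x y : EuclideanSpace ℝ (Fin n), ⟪Q x, y⟫ = ⟪x, Q y⟫)
    (hQpd : ∀ x : EuclideanSpace ℝ (Fin n), x ≠ 0 → 0 < ⟪Q x, x⟫)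
    (hinv₁ : ∀ x, Q (Qinv x) = x) (hinv₂ : ∀ x, Qinv (Q x) = x)
    (lamMax lamMin : ℝ) (hlamMaxPos : 0 < lamMax) (hlamMinPos : 0 < lamMin)
    (hRayleighMax : ∀ x : EuclideanSpace ℝ (Fin n), ⟪Q x, x⟫ ≤ lamMax * ‖x‖ ^ 2)
    (hRayleighMin : ∀ x : EuclideanSpace ℝ (Fin n), lamMin * ‖x‖ ^ 2 ≤ ⟪Q x, x⟫)
    (g : EuclideanSpace ℝ (Fin n)) (hg : g ≠ 0) (τ : ℝ)
    (hτpos : 0 < τ) (hτle : τ ≤ 1 / lamMax) :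
    (∀ α₁ α₂ : ℝ, 0 < α₁ → α₁ ≤ α₂ → α₂ ≤ 2 →
      doglegTau τ g Qinv α₁ ≤ doglegTau τ g Qinv α₂) ∧
    (∀ α : ℝ, 0 < α → α ≤ 1 → doglegTau τ g Qinv α = τ) ∧
    (∀ α₁ α₂ : ℝ, 1 ≤ α₁ → α₁ ≤ α₂ → α₂ ≤ 2 →
      doglegTau τ g Qinv α₁ ≤ doglegTau τ g Qinv α₂) := by
  have hG : 0 < ‖g‖ ^ 2 := by positivity
  have hb : 0 ≤ ⟪g, Qinv g⟫ - τ * ‖g‖ ^ 2 := by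
    have h1 : 0 ≤ ⟪Q (Qinv g - τ • g), Qinv g - τ • g⟫ :=
      le_trans (by positivity) (hRayleighMin _)
    have h2 := hRayleighMax g
    have h3 : ⟪Q g, Qinv g⟫ = ‖g‖ ^ 2 := by
      rw [hQsymm, hinv₁, real_inner_self_eq_norm_sq]
    rw [map_sub, map_smul, hinv₁] at h1
    simp only [inner_sub_left, inner_sub_right, real_inner_smul_left,
      real_inner_smul_right, h3, real_inner_self_eq_norm_sq] at h1
    have h4 : τ * lamMax ≤ 1 := by
      rwa [le_div_iff₀ hlamMaxPos] at hτle
    have h5 : τ * τ * ⟪Q g, g⟫ ≤ τ * τ * (lamMax * ‖g‖ ^ 2) := by gcongr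
    have h6 : τ * ‖g‖ ^ 2 * (τ * lamMax) ≤ τ * ‖g‖ ^ 2 * 1 := by gcongr
    nlinarith
  obtain ⟨b, hbdef⟩ : ∃ b, b = ⟪g, Qinv g⟫ - τ * ‖g‖ ^ 2 := ⟨_, rfl⟩
  obtain ⟨c, hcdef⟩ : ∃ c, c = ‖Qinv g - τ • g‖ ^ 2 := ⟨_, rfl⟩
  have hc : 0 ≤ c := by rw [hcdef]; positivity
  rw [← hbdef] at hb
  have key : ∀ α : ℝ, doglegTau τ g Qinv α =
      (τ ^ 2 * ‖g‖ ^ 2 + 2 * τ * max (α - 1) 0 * b + max (α - 1) 0 ^ 2 * c) /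
        (τ * ‖g‖ ^ 2 + max (α - 1) 0 * b) := by
    intro α
    have hp : doglegPath τ g Qinv α = -(τ • g + max (α - 1) 0 • (Qinv g - τ • g)) := by
      unfold doglegPath
      split_ifs with h
      · rw [max_eq_right (by linarith)]; simp
      · rw [max_eq_left (by linarith)]; module
    have hgd : ⟪g, Qinv g - τ • g⟫ = b := by
      rw [hbdef, inner_sub_right, real_inner_smul_right, real_inner_self_eq_norm_sq]
    unfold doglegTau
    rw [hp, norm_neg, inner_neg_right, neg_div_neg_eq, norm_add_sq_real, inner_add_right]
    simp only [real_inner_smul_left, real_inner_smul_right, real_inner_self_eq_norm_sq,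
      norm_smul, mul_pow, Real.norm_eq_abs, sq_abs, hgd, ← hcdef]
    congr 1
    ring
  have mono : ∀ α₁ α₂ : ℝ, α₁ ≤ α₂ → doglegTau τ g Qinv α₁ ≤ doglegTau τ g Qinv α₂ := by
    intro α₁ α₂ h
    rw [key, key]
    have hst : max (α₁ - 1) 0 ≤ max (α₂ - 1) 0 := max_le_max (by linarith) le_rfl
    have hs : 0 ≤ max (α₁ - 1) 0 := le_max_right _ _
    generalize max (α₁ - 1) 0 = s at *
    generalize max (α₂ - 1) 0 = t at *
    generalize ‖g‖ ^ 2 = G at *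
    have ht : 0 ≤ t := hs.trans hst
    rw [div_le_div_iff₀ (by positivity) (by positivity)]
    have h1 : 0 ≤ (t - s) * (τ ^ 2 * G * b + c * τ * G * (t + s) + b * c * t * s) :=
      mul_nonneg (by linarith) (by positivity)
    linarith
  refine ⟨fun α₁ α₂ _ h _ => mono α₁ α₂ h, fun α _ h => ?_, fun α₁ α₂ _ h _ => mono α₁ α₂ h⟩
  rw [key, max_eq_right (by linarith)]
  field_simp
  ring
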